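/- arXiv:2005.01806 — 2 statements merged into one kernel-verified Lean document; each statement's English description precedes it below -/
import Mathlib

section
/- Let a < b be real numbers and let g : [a,b] → ℂ be of bounded variation on [a,b], left-continuous at every point of the open interval (a,b), and satisfy g(a) = 0. Then there exists a sequence (g_k)_{k≥1} of functions belonging to S (the complex linear span of the indicator functions of the half-open intervals (c,b] with a ≤ c ≤ b and of the singleton {b}) such that sup_{t ∈ [a,b]} |g_k(t) − g(t)| → 0 as k → ∞ and sup_{k≥1} V(g_k, [a,b]) < ∞, where V(h,[a,b]) denotes the total variation of h on [a,b]. -/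
/-!
Let `v t` be the total variation of `g` on `[a, t]`. It is monotone, it dominates the increments
of `g`, and the left-continuity of `g` on `(a, b)` passes to it. Hence for `r ≥ 0` the set
`{t ∈ [a, b] | r < v t}` is `(c, b]`, `{b}` or empty (`memSpanS_superlevel`).

Given `ε > 0`, cut `[a, b]` into the finitely many level sets of `m t = ⌈v t / ε⌉₊`, and let `φ t`
be a representative, depending only on `m t`, of the level set that contains `t`. Then `g ∘ φ` is
within `ε` of `g`, and its variation is at most that of `g` since `φ` is monotone. By telescoping,
`g ∘ φ` is a combination of indicators of the sets `{j < m} = {j * ε < v}`; there is no constant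
term because `g` vanishes where `v` does (`exists_approx`).
-/

open Filter Set

/-- Membership in `S`, the complex linear span of the indicator functions of the
half-open intervals `(c, b]` with `a ≤ c ≤ b` and of the singleton `{b}`,
regarded as functions `ℝ → ℂ`. -/
def MemSpanS (a b : ℝ) (f : ℝ → ℂ) : Prop :=
  f ∈ Submodule.span ℂ
    ({h : ℝ → ℂ | ∃ c ∈ Set.Icc a b, h = Set.indicator (Set.Ioc c b) (fun _ => (1 : ℂ))} ∪
      {Set.indicator {b} (fun _ => (1 : ℂ))})

/-- Superlevel sets `{r < v}`, `r ≥ v a`, of a monotone `v` left-continuous on `(a, b)`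
(in the form `hl`) have their indicators in `S`. -/
lemma memSpanS_superlevel {a b : ℝ} (hab : a < b) {v : ℝ → ℝ} (hv : MonotoneOn v (Icc a b))
    {r : ℝ} (ha : v a ≤ r)
    (hl : ∀ c ∈ Ioo a b, (∀ s ∈ Ico a c, v s ≤ r) → v c ≤ r) :
    MemSpanS a b (indicator {t | t ∈ Icc a b ∧ r < v t} (fun _ => (1 : ℂ))) := by
  unfold MemSpanS
  by_cases hb : v b ≤ r
  · have : {t | t ∈ Icc a b ∧ r < v t} = ∅ := by
      ext t
      simp only [mem_ofPred_eq, mem_empty_iff_false, iff_false, not_and, not_lt]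
      exact fun ht => (hv ht (right_mem_Icc.2 hab.le) ht.2).trans hb
    rw [this, indicator_empty]
    exact Submodule.zero_mem _
  push Not at hb
  apply Submodule.subset_span
  set A : Set ℝ := {t | t ∈ Icc a b ∧ v t ≤ r} with hA
  have haA : a ∈ A := ⟨left_mem_Icc.2 hab.le, ha⟩
  have hbdd : BddAbove A := ⟨b, fun t ht => ht.1.2⟩
  have hac : a ≤ sSup A := le_csSup hbdd haA
  have hcb : sSup A ≤ b := csSup_le ⟨a, haA⟩ fun t ht => ht.1.2
  have hlt : ∀ t ∈ Icc a b, t < sSup A → v t ≤ r := by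
    intro t ht h
    obtain ⟨s, hs, hts⟩ := exists_lt_of_lt_csSup ⟨a, haA⟩ h
    exact (hv ht hs.1 hts.le).trans hs.2
  rcases hcb.eq_or_lt with h | h
  · right
    have : {t | t ∈ Icc a b ∧ r < v t} = {b} := by
      ext t
      simp only [mem_ofPred_eq, mem_singleton_iff]
      constructor
      · rintro ⟨ht, h1⟩
        by_contra hne
        exact absurd (hlt t ht (h ▸ lt_of_le_of_ne ht.2 hne)) (not_le.2 h1)
      · rintro rfl
        exact ⟨right_mem_Icc.2 hab.le, hb⟩
    rw [this]; rfl
  · left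
    refine ⟨sSup A, ⟨hac, hcb⟩, ?_⟩
    have hc : v (sSup A) ≤ r := by
      rcases hac.eq_or_lt with h' | h'
      · rw [← h']; exact ha
      · exact hl _ ⟨h', h⟩ fun s hs => hlt s ⟨hs.1, hs.2.le.trans hcb⟩ hs.2
    congr 1
    ext t
    simp only [mem_ofPred_eq, mem_Ioc]
    constructor
    · rintro ⟨ht, h1⟩
      refine ⟨?_, ht.2⟩
      by_contra! hne
      exact absurd ((hv ht ⟨hac, hcb⟩ hne).trans hc) (not_le.2 h1)
    · rintro ⟨h1, h2⟩
      have ht : t ∈ Icc a b := ⟨hac.trans h1.le, h2⟩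
      refine ⟨ht, ?_⟩
      by_contra! hne
      exact absurd (le_csSup hbdd (show t ∈ A from ⟨ht, hne⟩)) (not_le.2 h1)

/-- Approximation by an element of `S` up to `ε`, without increasing the variation. -/
lemma exists_approx (a b : ℝ) (hab : a < b) (g : ℝ → ℂ)
    (hBV : eVariationOn g (Icc a b) ≠ ⊤)
    (hleft : ∀ t ∈ Ioo a b, ContinuousWithinAt g (Ico a t) t)
    (hga : g a = 0) {ε : ℝ} (hε : 0 < ε) :
    ∃ h : ℝ → ℂ, MemSpanS a b h ∧ (∀ t ∈ Icc a b, dist (g t) (h t) ≤ ε) ∧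
      eVariationOn h (Icc a b) ≤ eVariationOn g (Icc a b) := by
  classical
  set v : ℝ → ℝ := fun t => (eVariationOn g (Icc a t)).toReal with hvdef
  have hfin : ∀ t ∈ Icc a b, eVariationOn g (Icc a t) ≠ ⊤ := fun t ht =>
    ne_top_of_le_ne_top hBV (eVariationOn.mono g (Icc_subset_Icc_right ht.2))
  have hv : MonotoneOn v (Icc a b) := fun s _ t ht hst =>
    ENNReal.toReal_mono (hfin t ht) (eVariationOn.mono g (Icc_subset_Icc_right hst))
  have hva : v a = 0 := by simp [hvdef]
  have hdist : ∀ s ∈ Icc a b, ∀ t ∈ Icc a b, s ≤ t → dist (g s) (g t) ≤ v t - v s := by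
    intro s hs t ht hst
    have h := eVariationOn.Icc_add_Icc g (s := univ) hs.1 hst (mem_univ s)
    simp only [univ_inter] at h
    have hst_fin : eVariationOn g (Icc s t) ≠ ⊤ :=
      ne_top_of_le_ne_top hBV (eVariationOn.mono g (Icc_subset_Icc hs.1 ht.2))
    have h2 : v t = v s + (eVariationOn g (Icc s t)).toReal := by
      simp only [hvdef]
      rw [← h, ENNReal.toReal_add (hfin s hs) hst_fin]
    have h3 : dist (g s) (g t) ≤ (eVariationOn g (Icc s t)).toReal :=
      BoundedVariationOn.dist_le hst_fin (left_mem_Icc.2 hst) (right_mem_Icc.2 hst)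
    linarith
  have hl : ∀ r, 0 ≤ r → ∀ c ∈ Ioo a b, (∀ s ∈ Ico a c, v s ≤ r) → v c ≤ r := by
    intro r hr c hc hs
    have hcont : ContinuousWithinAt g (Iic c) c :=
      continuousWithinAt_Iio_iff_Iic.1 ((continuousWithinAt_Ico_iff_Iio hc.1).1 (hleft c hc))
    have heq := eVariationOn.eVariationOn_Ico_eq_Icc_of_continuousWithinAt (b := a) hcont
    apply ENNReal.toReal_le_of_le_ofReal hr
    rw [← heq]
    by_contra! hlt
    obtain ⟨x, _, y, hy, _, h⟩ := eVariationOn.exists_lt_eVariationOn_inter_Icc hlt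
    have h1 : eVariationOn g (Icc a y) ≤ ENNReal.ofReal r :=
      (ENNReal.le_ofReal_iff_toReal_le (hfin y ⟨hy.1, hy.2.le.trans hc.2.le⟩) hr).2 (hs y hy)
    have h2 : eVariationOn g (Ico a c ∩ Icc x y) ≤ eVariationOn g (Icc a y) :=
      eVariationOn.mono g fun z hz => ⟨hz.1.1, hz.2.2⟩
    exact absurd (h.trans_le (h2.trans h1)) (lt_irrefl _)
  set m : ℝ → ℕ := fun t => ⌈v t / ε⌉₊ with hm
  -- One representative in `[a, b]` for each attained level of `m`.
  set rep : ℕ → ℝ := fun k => if h : ∃ t ∈ Icc a b, m t = k then h.choose else a with hrep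
  have hrep_spec : ∀ t ∈ Icc a b, rep (m t) ∈ Icc a b ∧ m (rep (m t)) = m t := by
    intro t ht
    have h : ∃ s ∈ Icc a b, m s = m t := ⟨t, ht, rfl⟩
    simp only [hrep, dif_pos h]
    exact h.choose_spec
  have hm_mono : MonotoneOn m (Icc a b) := fun s hs t ht hst =>
    Nat.ceil_mono (div_le_div_of_nonneg_right (hv hs ht hst) hε.le)
  have hlt_iff : ∀ t (j : ℕ), j < m t ↔ j * ε < v t := by
    intro t j
    simp only [hm, Nat.lt_ceil, lt_div_iff₀ hε]
  have hrep_mono : MonotoneOn (fun t => rep (m t)) (Icc a b) := by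
    intro s hs t ht hst
    rcases (hm_mono hs ht hst).eq_or_lt with h | h
    · simp [h]
    · by_contra! hc
      have := hm_mono (hrep_spec t ht).1 (hrep_spec s hs).1 hc.le
      rw [(hrep_spec t ht).2, (hrep_spec s hs).2] at this
      omega
  -- Points on the same level are within `ε` in `v`-distance, hence in `g`-distance.
  have hclose : ∀ s ∈ Icc a b, ∀ t ∈ Icc a b, s ≤ t → m s = m t → dist (g s) (g t) ≤ ε := by
    intro s hs t ht hst hmst
    refine (hdist s hs t ht hst).trans ?_
    rcases Nat.eq_zero_or_pos (m t) with h0 | h0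
    · have h1 : v t ≤ 0 := by
        have := (hlt_iff t 0).not.1 (by omega)
        simpa using this
      have h2 : 0 ≤ v s := ENNReal.toReal_nonneg
      linarith
    · have h1 : ((m t - 1 : ℕ) : ℝ) * ε < v s := (hlt_iff s _).1 (by omega)
      have h2 : v t ≤ (m t : ℝ) * ε := not_lt.1 ((hlt_iff t (m t)).not.1 (lt_irrefl _))
      rw [Nat.cast_sub h0] at h1
      push_cast at h1
      linarith
  have hg0 : g (rep 0) = 0 := by
    have hma : m a = 0 := by simp [hm, hva]
    have h := hrep_spec a (left_mem_Icc.2 hab.le)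
    rw [hma] at h
    have h1 : v (rep 0) ≤ 0 := by
      have := (hlt_iff (rep 0) 0).not.1 (by omega)
      simpa using this
    have h2 := hdist a (left_mem_Icc.2 hab.le) _ h.1 h.1.1
    rw [hva, hga] at h2
    exact (dist_le_zero.1 (h2.trans (by linarith))).symm
  set H : ℝ → ℂ := ∑ j ∈ Finset.range (m b), (g (rep (j + 1)) - g (rep j)) •
    indicator {t | t ∈ Icc a b ∧ j * ε < v t} (fun _ => (1 : ℂ)) with hH
  have hHeq : EqOn H (g ∘ fun t => rep (m t)) (Icc a b) := by
    intro t ht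
    have hmt : m t ≤ m b := hm_mono ht (right_mem_Icc.2 hab.le) ht.2
    have h1 : H t = ∑ j ∈ Finset.range (m b),
        if j < m t then g (rep (j + 1)) - g (rep j) else 0 := by
      rw [hH, Finset.sum_apply]
      refine Finset.sum_congr rfl fun j _ => ?_
      simp only [Pi.smul_apply, smul_eq_mul, indicator_apply, mem_ofPred_eq, ht, true_and,
        hlt_iff, mul_ite, mul_one, mul_zero]
    have h2 : (Finset.range (m b)).filter (fun j => j < m t) = Finset.range (m t) := by
      ext j
      simp only [Finset.mem_filter, Finset.mem_range]
      omega
    rw [h1, ← Finset.sum_filter, h2, Finset.sum_range_sub (fun j => g (rep j)), hg0, sub_zero]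
    rfl
  refine ⟨H, ?_, ?_, ?_⟩
  · refine Submodule.sum_mem _ fun j _ => Submodule.smul_mem _ _ ?_
    have hj : (0 : ℝ) ≤ j * ε := by positivity
    exact memSpanS_superlevel hab hv (hva.trans_le hj) (hl _ hj)
  · intro t ht
    rw [hHeq ht]
    obtain ⟨h1, h2⟩ := hrep_spec t ht
    rcases le_total t (rep (m t)) with h | h
    · exact hclose t ht _ h1 h h2.symm
    · rw [dist_comm]
      exact hclose _ h1 t ht h h2
  · rw [eVariationOn.congr hHeq]
    exact eVariationOn.comp_le_of_monotoneOn g _ hrep_mono fun t ht => (hrep_spec t ht).1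

/-- For every function `g : [a,b] → ℂ` of bounded variation, left-continuous on `(a,b)`
and vanishing at `a`, there is a sequence of functions of the span `S` of indicators of
intervals `(c,b]` and of `{b}` that converges to `g` uniformly on `[a,b]` and has
uniformly bounded total variations. -/
theorem stmt_0 (a b : ℝ) (hab : a < b) (g : ℝ → ℂ)
    (hBV : eVariationOn g (Set.Icc a b) ≠ ⊤)
    (hleft : ∀ t ∈ Set.Ioo a b, ContinuousWithinAt g (Set.Ico a t) t)
    (hga : g a = 0) :
    ∃ G : ℕ → ℝ → ℂ,
      (∀ k, MemSpanS a b (G k)) ∧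
      TendstoUniformlyOn (fun k t => G k t) g atTop (Set.Icc a b) ∧
      ∃ M : ℝ, ∀ k, eVariationOn (G k) (Set.Icc a b) ≤ ENNReal.ofReal M := by
  choose G hG1 hG2 hG3 using fun k : ℕ =>
    exists_approx a b hab g hBV hleft hga (Nat.one_div_pos_of_nat (α := ℝ) (n := k))
  refine ⟨G, hG1, ?_, (eVariationOn g (Icc a b)).toReal, fun k => ?_⟩
  · rw [Metric.tendstoUniformlyOn_iff]
    intro ε hε
    filter_upwards [tendsto_one_div_add_atTop_nhds_zero_nat.eventually (gt_mem_nhds hε)]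
      with k hk t ht
    exact (hG2 k t ht).trans_lt hk
  · rw [ENNReal.ofReal_toReal hBV]
    exact hG3 k
end

section
/- Let a < b be real numbers and let g : [a,b] → ℝ be monotone nondecreasing, left-continuous at every point of (a,b), and satisfy g(a) = 0. Then there exists a sequence (g_k)_{k≥1} of monotone nondecreasing functions g_k : [a,b] → ℝ, each a finite linear combination with nonnegative real coefficients of indicator functions of intervals (c,b] (a ≤ c ≤ b) and of {b}, such that sup_{t ∈ [a,b]} |g_k(t) − g(t)| → 0 as k → ∞ and sup_{k≥1} V(g_k,[a,b]) < ∞. -/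
/-!
Approximate `g` by rounding its values up to the grid `ℤ / n`: the function `⌈n * g t⌉₊ / n` is
monotone and within `1 / n` of `g`, and its variation is its increment over `[a, b]`, hence at
most `g b + 1`. It is the sum over `j < ⌈n * g b⌉₊` of `1 / n` times the indicator of the
superlevel set `{t | j / n < g t}`. Monotonicity and left-continuity force each such superlevel
set to be an interval `(τ, b]` or the singleton `{b}` (`exists_superlevel`), so the rounded
function is a nonnegative step combination (`exists_stepComb_eq_ceil`).
-/

open Filter Set

/-- `f` is a finite linear combination with nonnegative real coefficients of indicator
functions of intervals `(c, b]` with `a ≤ c ≤ b` and of the singleton `{b}`. -/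
def IsNonnegStepComb (a b : ℝ) (f : ℝ → ℝ) : Prop :=
  ∃ (p : ℕ) (c : Fin p → ℝ) (τ : Fin p → ℝ) (d : ℝ),
    (∀ j, 0 ≤ c j) ∧ (∀ j, τ j ∈ Set.Icc a b) ∧ 0 ≤ d ∧
    ∀ x, f x = (∑ j, c j * Set.indicator (Set.Ioc (τ j) b) (fun _ => (1 : ℝ)) x)
      + d * Set.indicator {b} (fun _ => (1 : ℝ)) x

/-- A nonempty strict superlevel set of `g` at a level `y ≥ 0` is `(τ, b]` or `{b}`. The two
cases are `e = 0` and `τ = b`, `e = 1`, the interval `(b, b]` being empty. -/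
lemma exists_superlevel {a b : ℝ} (hab : a < b) {g : ℝ → ℝ}
    (hmono : MonotoneOn g (Set.Icc a b))
    (hleft : ∀ t ∈ Set.Ioo a b, ContinuousWithinAt g (Set.Ico a t) t)
    (hga : g a = 0) {y : ℝ} (hy : 0 ≤ y) (hyb : y < g b) :
    ∃ τ ∈ Set.Icc a b, ∃ e : ℝ, 0 ≤ e ∧ ∀ t ∈ Set.Icc a b,
      Set.indicator (Set.Ioc τ b) (fun _ => (1 : ℝ)) t
        + e * Set.indicator {b} (fun _ => (1 : ℝ)) t = if y < g t then 1 else 0 := by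
  set S : Set ℝ := {t | t ∈ Set.Icc a b ∧ g t ≤ y} with hS
  have haS : a ∈ S := ⟨⟨le_rfl, hab.le⟩, by rw [hga]; exact hy⟩
  have hbdd : BddAbove S := ⟨b, fun t ht => ht.1.2⟩
  have haτ : a ≤ sSup S := le_csSup hbdd haS
  have hτb : sSup S ≤ b := csSup_le ⟨a, haS⟩ fun t ht => ht.1.2
  have hgt : ∀ t ∈ Set.Icc a b, sSup S < t → y < g t := by
    intro t ht h
    by_contra hn
    exact absurd (le_csSup hbdd (show t ∈ S from ⟨ht, not_lt.1 hn⟩)) (not_le.2 h)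
  have hlt : ∀ t ∈ Set.Icc a b, t < sSup S → g t ≤ y := by
    intro t ht h
    obtain ⟨s, hs, hts⟩ := exists_lt_of_lt_csSup ⟨a, haS⟩ h
    exact (hmono ht hs.1 hts.le).trans hs.2
  rcases hτb.lt_or_eq with hτ | hτ
  · -- Left-continuity puts the supremum itself in the sublevel set.
    have hτy : g (sSup S) ≤ y := by
      rcases haτ.lt_or_eq with h | h
      · have hc := hleft _ ⟨h, hτ⟩
        have : (nhdsWithin (sSup S) (Set.Ico a (sSup S))).NeBot := by
          rw [← mem_closure_iff_nhdsWithin_neBot, closure_Ico h.ne]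
          exact ⟨haτ, le_rfl⟩
        refine le_of_tendsto hc ?_
        filter_upwards [self_mem_nhdsWithin] with t ht
        exact hlt t ⟨ht.1, ht.2.le.trans hτb⟩ ht.2
      · rw [← h, hga]; exact hy
    refine ⟨sSup S, ⟨haτ, hτb⟩, 0, le_rfl, fun t ht => ?_⟩
    rcases lt_or_ge (sSup S) t with h | h
    · simp [Set.indicator, h, ht.2, hgt t ht h]
    · have : g t ≤ y := (hmono ht ⟨haτ, hτb⟩ h).trans hτy
      simp [Set.indicator, not_lt.2 h, not_lt.2 this]
  · refine ⟨b, ⟨hab.le, le_rfl⟩, 1, zero_le_one, fun t ht => ?_⟩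
    rcases ht.2.lt_or_eq with h | h
    · have : g t ≤ y := hlt t ht (hτ ▸ h)
      simp [Set.indicator, h.ne, not_lt.2 this]
    · subst h
      simp [hyb]

lemma sum_ite_lt_eq_ceil {p : ℕ} {x : ℝ} (hx : ⌈x⌉₊ ≤ p) :
    ∑ j : Fin p, (if ((j : ℕ) : ℝ) < x then (1 : ℝ) else 0) = ⌈x⌉₊ := by
  rw [Fin.sum_univ_eq_sum_range (fun j : ℕ => if (j : ℝ) < x then (1 : ℝ) else 0) p,
    Finset.sum_boole]
  have : (Finset.range p).filter (fun j : ℕ => (j : ℝ) < x) = Finset.range ⌈x⌉₊ := by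
    ext j
    simp only [Finset.mem_filter, Finset.mem_range, ← Nat.lt_ceil]
    omega
  rw [this, Finset.card_range]

/-- Rounding the values of `g` up to multiples of `1 / n` yields, on `[a, b]`, a nonnegative step
combination. -/
lemma exists_stepComb_eq_ceil {a b : ℝ} (hab : a < b) {g : ℝ → ℝ}
    (hmono : MonotoneOn g (Set.Icc a b))
    (hleft : ∀ t ∈ Set.Ioo a b, ContinuousWithinAt g (Set.Ico a t) t)
    (hga : g a = 0) {n : ℝ} (hn : 0 < n) :
    ∃ G : ℝ → ℝ, IsNonnegStepComb a b G ∧ ∀ t ∈ Set.Icc a b, G t = ⌈n * g t⌉₊ / n := by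
  have key : ∀ j : Fin ⌈n * g b⌉₊, ∃ τ ∈ Set.Icc a b, ∃ e : ℝ, 0 ≤ e ∧ ∀ t ∈ Set.Icc a b,
      Set.indicator (Set.Ioc τ b) (fun _ => (1 : ℝ)) t
        + e * Set.indicator {b} (fun _ => (1 : ℝ)) t
          = if ((j : ℕ) : ℝ) / n < g t then 1 else 0 := fun j =>
    exists_superlevel hab hmono hleft hga (by positivity)
      ((div_lt_iff₀' hn).2 (Nat.lt_ceil.1 j.2))
  choose τ hτ e he h using key
  refine ⟨_, ⟨_, fun _ => 1 / n, τ, ∑ j, 1 / n * e j, fun _ => by positivity, hτ,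
    Finset.sum_nonneg fun j _ => mul_nonneg (by positivity) (he j), fun x => rfl⟩, ?_⟩
  intro t ht
  have hle : ⌈n * g t⌉₊ ≤ ⌈n * g b⌉₊ :=
    Nat.ceil_mono (mul_le_mul_of_nonneg_left (hmono ht ⟨hab.le, le_rfl⟩ ht.2) hn.le)
  rw [← sum_ite_lt_eq_ceil hle, Finset.sum_mul, ← Finset.sum_add_distrib, Finset.sum_div]
  refine Finset.sum_congr rfl fun j _ => ?_
  have := h j t ht
  simp only [div_lt_iff₀' hn] at this
  rw [← this]
  ring

/-- Every monotone nondecreasing function `g : [a,b] → ℝ` that is left-continuous on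
`(a,b)` and satisfies `g a = 0` is the uniform limit on `[a,b]` of a sequence of monotone
nondecreasing nonnegative step combinations with uniformly bounded total variations. -/
theorem stmt_4 (a b : ℝ) (hab : a < b) (g : ℝ → ℝ)
    (hmono : MonotoneOn g (Set.Icc a b))
    (hleft : ∀ t ∈ Set.Ioo a b, ContinuousWithinAt g (Set.Ico a t) t)
    (hga : g a = 0) :
    ∃ G : ℕ → ℝ → ℝ,
      (∀ k, IsNonnegStepComb a b (G k) ∧ MonotoneOn (G k) (Set.Icc a b)) ∧
      TendstoUniformlyOn (fun k t => G k t) g atTop (Set.Icc a b) ∧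
      ∃ M : ℝ, ∀ k, eVariationOn (G k) (Set.Icc a b) ≤ ENNReal.ofReal M := by
  have hpos : ∀ k : ℕ, (0 : ℝ) < (k : ℝ) + 1 := fun k => by positivity
  choose G hG hGe using fun k : ℕ =>
    exists_stepComb_eq_ceil hab hmono hleft hga (hpos k)
  have ha : a ∈ Set.Icc a b := ⟨le_rfl, hab.le⟩
  have hb : b ∈ Set.Icc a b := ⟨hab.le, le_rfl⟩
  have hGmono : ∀ k, MonotoneOn (G k) (Set.Icc a b) := by
    intro k s hs t ht hst
    rw [hGe k s hs, hGe k t ht]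
    have := hpos k
    have := hmono hs ht hst
    gcongr
  have hlow : ∀ k, ∀ t ∈ Set.Icc a b, g t ≤ G k t := by
    intro k t ht
    rw [hGe k t ht, le_div_iff₀' (hpos k)]
    exact Nat.le_ceil _
  have hup : ∀ k, ∀ t ∈ Set.Icc a b, G k t ≤ g t + 1 / ((k : ℝ) + 1) := by
    intro k t ht
    have h0 : 0 ≤ g t := hga ▸ hmono ha ht ht.1
    have := (Nat.ceil_lt_add_one (mul_nonneg (hpos k).le h0)).le
    rw [hGe k t ht, div_le_iff₀' (hpos k), mul_add, mul_one_div_cancel (hpos k).ne']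
    exact this
  refine ⟨G, fun k => ⟨hG k, hGmono k⟩, ?_, g b + 1, fun k => ?_⟩
  · rw [Metric.tendstoUniformlyOn_iff]
    intro ε hε
    filter_upwards [tendsto_one_div_add_atTop_nhds_zero_nat.eventually (gt_mem_nhds hε)]
      with k hk t ht
    rw [Real.dist_eq, abs_sub_lt_iff]
    constructor <;> linarith [hlow k t ht, hup k t ht]
  · have h1 := ((hGmono k).eVariationOn_eq ha hb).le
    rw [Set.inter_self] at h1
    refine h1.trans (ENNReal.ofReal_le_ofReal ?_)
    have h2 : 1 / ((k : ℝ) + 1) ≤ 1 := by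
      rw [div_le_one (hpos k)]
      linarith [(Nat.cast_nonneg k : (0 : ℝ) ≤ k)]
    linarith [hlow k a ha, hup k b hb]
end
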